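/- Let K be the n-gon (n vertices v_0,...,v_{n-1} and n edges [v_i, v_{i+1}] with indices mod n) with weight function φ given by angle weights α_0,...,α_{n-1} ∈ ℤ: φ([v_i,v_j],[v_i]) = α_i, φ([v_i,v_j],[v_j]) = α_j for i < j. Then the n×n matrix [∂_1] of the φ-weighted boundary map has determinant 0, and for 1 ≤ k ≤ n−1, the gcd of all determinants of k×k minors of [∂_1] equals gcd({α_{i_1}···α_{i_k} : i_1 < ··· < i_k}). Consequently H_0(K,φ;ℤ) ≅ ℤ/d_1 ⊕ ··· ⊕ ℤ/d_{n-1} ⊕ ℤ where d_1···d_k = gcd({α_{i_1}···α_{i_k}}) and d_n = 0. -/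

import Mathlib

open scoped Matrix

namespace NGon

lemma bez (a b : ℤ) : ∃ g a' b' u v : ℤ, a = g * a' ∧ b = g * b' ∧ u * a' + v * b' = 1 := by
  obtain ⟨a', b', ha, hb, h⟩ := extract_gcd a b
  rw [gcd_isUnit_iff] at h
  obtain ⟨u, v, huv⟩ := h
  exact ⟨_, a', b', u, v, ha, hb, huv⟩

/-- generating polynomial of the ideals of `k`-fold products -/
noncomputable def P {n : ℕ} (α : Fin n → ℤ) : Polynomial (Ideal ℤ) :=
  ∏ i, (Polynomial.X + Polynomial.C (Ideal.span {α i}))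

lemma P_coeff {n : ℕ} (α : Fin n → ℤ) (k : ℕ) (hk : k ≤ n) :
    (P α).coeff (n - k) = Ideal.span {(Finset.powersetCard k (Finset.univ : Finset (Fin n))).gcd
            (fun s => ∏ i ∈ s, α i)} := by
  have h := Finset.prod_X_add_C_coeff (Finset.univ : Finset (Fin n))
    (fun i => (Ideal.span {α i} : Ideal ℤ)) (k := n - k) (by simp)
  rw [P, h]
  have : (Finset.univ : Finset (Fin n)).card - (n - k) = k := by simp; omega
  rw [this, Ideal.sum_eq_sup]
  simp_rw [Ideal.prod_span_singleton]
  generalize Finset.powersetCard k (Finset.univ : Finset (Fin n)) = T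
  classical
  induction T using Finset.induction_on with
  | empty => simp
  | insert a T ha ih =>
    rw [Finset.sup_insert, ih, Finset.gcd_insert, span_gcd, Ideal.span_insert]

/-- equivalence of weights -/
def R {n : ℕ} (α β : Fin n → ℤ) : Prop :=
  (∃ U V : (Fin n → ℤ) ≃ₗ[ℤ] (Fin n → ℤ),
    (∀ x, U (α * x) = β * V x) ∧ ∀ x, ∑ i, V x i = ∑ i, x i) ∧ P α = P β

lemma R.refl {n : ℕ} (α : Fin n → ℤ) : R α α :=
  ⟨⟨LinearEquiv.refl _ _, LinearEquiv.refl _ _, fun _ => rfl, fun _ => rfl⟩, rfl⟩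

lemma R.trans {n : ℕ} {α β γ : Fin n → ℤ} (h : R α β) (h' : R β γ) : R α γ := by
  obtain ⟨⟨U, V, h1, h2⟩, h3⟩ := h
  obtain ⟨⟨U', V', h1', h2'⟩, h3'⟩ := h'
  refine ⟨⟨U.trans U', V.trans V', fun x => ?_, fun x => ?_⟩, h3.trans h3'⟩
  · simp [h1, h1']
  · simp [h2, h2']

/-- extend an automorphism -/
def ext {n : ℕ} (U : (Fin n → ℤ) ≃ₗ[ℤ] (Fin n → ℤ)) :
    (Fin (n + 1) → ℤ) ≃ₗ[ℤ] (Fin (n + 1) → ℤ) :=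
  ((Fin.consLinearEquiv ℤ (fun _ : Fin (n+1) => ℤ)).symm.trans
    ((LinearEquiv.refl ℤ ℤ).prodCongr U)).trans (Fin.consLinearEquiv ℤ (fun _ : Fin (n+1) => ℤ))

lemma ext_zero {n : ℕ} (U : (Fin n → ℤ) ≃ₗ[ℤ] (Fin n → ℤ)) (x) : ext U x 0 = x 0 := by
  simp [ext, Fin.consLinearEquiv, Fin.consEquiv]

lemma ext_succ {n : ℕ} (U : (Fin n → ℤ) ≃ₗ[ℤ] (Fin n → ℤ)) (x) (i : Fin n) :
    ext U x i.succ = U (fun j => x j.succ) i := by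
  simp [ext, Fin.consLinearEquiv, Fin.consEquiv, Fin.tail_def]

lemma R.cons {n : ℕ} {α β : Fin n → ℤ} (h : R α β) (c : ℤ) :
    R (Fin.cons c α : Fin (n+1) → ℤ) (Fin.cons c β) := by
  obtain ⟨⟨U, V, h1, h2⟩, h3⟩ := h
  refine ⟨⟨ext U, ext V, fun x => ?_, fun x => ?_⟩, ?_⟩
  · funext i
    refine Fin.cases ?_ (fun i => ?_) i
    · simp [ext_zero]
    · have := congrFun (h1 (fun j => x j.succ)) i
      simp only [Pi.mul_apply] at this
      simp only [ext_succ, Pi.mul_apply, Fin.cons_succ]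
      exact this
  · simp [Fin.sum_univ_succ, ext_zero, ext_succ, h2]
  · simp only [P, Fin.prod_univ_succ, Fin.cons_zero, Fin.cons_succ] at h3 ⊢
    rw [h3]

/-- two by two action -/
def act {n : ℕ} (p q r s : ℤ) : (Fin (n + 2) → ℤ) →ₗ[ℤ] (Fin (n + 2) → ℤ) where
  toFun x := Fin.cons (p * x 0 + q * x 1) (Fin.cons (r * x 0 + s * x 1) (fun i => x i.succ.succ))
  map_add' x y := by
    funext i
    refine Fin.cases ?_ (fun i => Fin.cases ?_ (fun i => ?_) i) i <;> simp <;> ring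
  map_smul' c x := by
    funext i
    refine Fin.cases ?_ (fun i => Fin.cases ?_ (fun i => ?_) i) i <;> simp <;> ring

lemma act_zero {n : ℕ} (p q r s : ℤ) (x : Fin (n+2) → ℤ) :
    act p q r s x 0 = p * x 0 + q * x 1 := rfl
lemma act_one {n : ℕ} (p q r s : ℤ) (x : Fin (n+2) → ℤ) :
    act p q r s x 1 = r * x 0 + s * x 1 := rfl
lemma act_succ {n : ℕ} (p q r s : ℤ) (x : Fin (n+2) → ℤ) (i : Fin n) :
    act p q r s x i.succ.succ = x i.succ.succ := rfl

lemma act_act {n : ℕ} (p q r s : ℤ) (h : p * s - q * r = 1) (x : Fin (n+2) → ℤ) :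
    act p q r s (act s (-q) (-r) p x) = x := by
  funext i
  refine Fin.cases ?_ (fun i => Fin.cases ?_ (fun i => ?_) i) i
  · simp only [act_zero, act_one]; linear_combination x 0 * h
  · simp only [act_zero, act_one, Fin.succ_zero_eq_one]; linear_combination x 1 * h
  · simp only [act_succ]

/-- two by two action as an automorphism -/
def actE {n : ℕ} (p q r s : ℤ) (h : p * s - q * r = 1) :
    (Fin (n + 2) → ℤ) ≃ₗ[ℤ] (Fin (n + 2) → ℤ) :=
  LinearEquiv.ofLinearMap (act p q r s) (act s (-q) (-r) p)
    (LinearMap.ext fun x => act_act p q r s h x)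
    (LinearMap.ext fun x => by
      have := act_act s (-q) (-r) p (by linear_combination h) x
      simpa using this)

lemma actE_apply {n : ℕ} (p q r s : ℤ) (h : p * s - q * r = 1) (x : Fin (n+2) → ℤ) :
    actE p q r s h x = act p q r s x := rfl

lemma cons_cons_one {n : ℕ} (a b : ℤ) (γ : Fin n → ℤ) :
    (Fin.cons a (Fin.cons b γ : Fin (n+1) → ℤ) : Fin (n+2) → ℤ) 1 = b := rfl

lemma R.step {n : ℕ} (g a b u v : ℤ) (h : u * a + v * b = 1) (γ : Fin n → ℤ) :
    R (Fin.cons (g * a) (Fin.cons (g * b) γ : Fin (n+1) → ℤ) : Fin (n+2) → ℤ)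
      (Fin.cons g (Fin.cons (g * a * b) γ : Fin (n+1) → ℤ)) := by
  refine ⟨⟨actE u (-v) (b - u * a * b) (a + v * a * b) (by linear_combination h),
    actE (a * u) (-(b * v)) (1 - a * u) (1 + b * v) (by linear_combination h),
    fun x => ?_, fun x => ?_⟩, ?_⟩
  · funext i
    simp only [actE_apply]
    refine Fin.cases ?_ (fun i => Fin.cases ?_ (fun i => ?_) i) i
    · simp only [act_zero, Pi.mul_apply, Fin.cons_zero, cons_cons_one]; ring
    · simp only [act_one, Pi.mul_apply, Fin.succ_zero_eq_one, Fin.cons_zero, cons_cons_one]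
      linear_combination (0 : ℤ) * h
    · simp [act_succ]
  · simp only [actE_apply, Fin.sum_univ_succ, act_succ, act_zero, act_one, Fin.succ_zero_eq_one]
    ring
  · simp only [P, Fin.prod_univ_succ, Fin.cons_zero, Fin.cons_succ]
    rw [← mul_assoc, ← mul_assoc]
    congr 1
    have e1 : (Ideal.span {g * a} : Ideal ℤ) + Ideal.span {g * b} = Ideal.span {g} := by
      rw [Submodule.add_eq_sup, ← Ideal.span_insert]
      apply le_antisymm
      · rw [Ideal.span_le]
        rintro x (rfl | rfl)
        · exact Ideal.mem_span_singleton.2 (Dvd.intro _ rfl)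
        · exact Ideal.mem_span_singleton.2 (Dvd.intro _ rfl)
      · rw [Ideal.span_singleton_le_iff_mem, Ideal.mem_span_pair]
        exact ⟨u, v, by linear_combination g * h⟩
    have e2 : (Ideal.span {g} : Ideal ℤ) + Ideal.span {g * a * b} = Ideal.span {g} := by
      rw [Submodule.add_eq_sup, sup_eq_left, Ideal.span_singleton_le_span_singleton]
      exact ⟨a * b, by ring⟩
    have e3 : (Ideal.span {g * a} : Ideal ℤ) * Ideal.span {g * b}
        = Ideal.span {g} * Ideal.span {g * a * b} := by
      simp only [Ideal.span_singleton_mul_span_singleton]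
      congr 2; ring
    have key : ∀ I J : Ideal ℤ, (Polynomial.X + Polynomial.C I) * (Polynomial.X + Polynomial.C J)
        = Polynomial.X ^ 2 + Polynomial.C (I + J) * Polynomial.X + Polynomial.C (I * J) := by
      intro I J
      simp only [map_add, map_mul]; ring
    rw [key, key, e1, e2, e3]

lemma insert_chain : ∀ (n : ℕ) (a : ℤ) (β : Fin n → ℤ) (_ : ∀ i j, i ≤ j → β i ∣ β j),
    ∃ γ : Fin (n + 1) → ℤ, R (Fin.cons a β) γ ∧ (∀ i j, i ≤ j → γ i ∣ γ j) ∧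
      ∀ c, c ∣ a → (∀ i, c ∣ β i) → ∀ i, c ∣ γ i
  | 0, a, β, hβ => ⟨Fin.cons a β, R.refl _, by
      intro i j _; rw [show i = j from Fin.ext (by omega)], by
      intro c hc _ i; rw [show i = 0 from Fin.ext (by omega)]; simpa using hc⟩
  | n + 1, a, β, hβ => by
    obtain ⟨g, a', b', u, v, rfl, hb, h⟩ := bez a (β 0)
    obtain ⟨γ, hR, hc, hd⟩ := insert_chain n (g * a' * b') (fun i => β i.succ)
      (fun i j hij => hβ _ _ (Fin.succ_le_succ_iff.2 hij))
    refine ⟨Fin.cons g γ, ?_, ?_, ?_⟩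
    · have e : β = Fin.cons (g * b') (fun i => β i.succ) := by
        rw [← hb]; exact (Fin.cons_self_tail β).symm
      rw [e]
      exact (R.step g a' b' u v h _).trans (hR.cons g)
    · have hg : ∀ i, g ∣ γ i := hd g ⟨a' * b', by ring⟩
        (fun i => (Dvd.intro _ hb.symm).trans (hβ 0 i.succ (Fin.zero_le _)))
      intro i j
      refine Fin.cases ?_ (fun i => ?_) i
      · refine Fin.cases ?_ (fun j => ?_) j
        · simp
        · simpa using hg j
      · refine Fin.cases ?_ (fun j => ?_) j
        · intro h; simp at h
        · intro h; simpa using hc i j (Fin.succ_le_succ_iff.1 h)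
    · intro c hca hcb i
      have hcg : c ∣ g := by
        have h0 := hcb 0
        rw [hb] at h0
        have : g = u * (g * a') + v * (g * b') := by linear_combination -g * h
        rw [this]
        exact dvd_add (hca.mul_left _) (h0.mul_left _)
      refine Fin.cases ?_ (fun i => ?_) i
      · simpa using hcg
      · simpa using hd c ((hcg.mul_right _).mul_right _) (fun i => hcb _) i

lemma exists_chain : ∀ (n : ℕ) (α : Fin n → ℤ),
    ∃ γ : Fin n → ℤ, R α γ ∧ (∀ i j, i ≤ j → γ i ∣ γ j)
  | 0, α => ⟨α, R.refl _, fun i => i.elim0⟩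
  | n + 1, α => by
    obtain ⟨β, hR, hβ⟩ := exists_chain n (Fin.tail α)
    obtain ⟨γ, hR', hγ, -⟩ := insert_chain n (α 0) β hβ
    refine ⟨γ, ?_, hγ⟩
    have := (hR.cons (α 0)).trans hR'
    rwa [Fin.cons_self_tail] at this

/-- the image of the boundary map -/
def N {n : ℕ} (α : Fin n → ℤ) : Submodule ℤ (Fin n → ℤ) where
  carrier := {z | ∃ y : Fin n → ℤ, ∑ i, y i = 0 ∧ α * y = z}
  zero_mem' := ⟨0, by simp, by simp⟩
  add_mem' := by
    rintro _ _ ⟨y, hy, rfl⟩ ⟨y', hy', rfl⟩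
    exact ⟨y + y', by simp [Finset.sum_add_distrib, hy, hy'], by ring⟩
  smul_mem' := by
    rintro c _ ⟨y, hy, rfl⟩
    exact ⟨c • y, by simp [← Finset.mul_sum, hy], by ext; simp; ring⟩

lemma mem_N {n : ℕ} {α : Fin n → ℤ} {z : Fin n → ℤ} :
    z ∈ N α ↔ ∃ y : Fin n → ℤ, ∑ i, y i = 0 ∧ α * y = z := Iff.rfl

lemma R.quot {n : ℕ} {α β : Fin n → ℤ} (h : R α β) :
    Nonempty (((Fin n → ℤ) ⧸ N α) ≃ₗ[ℤ] ((Fin n → ℤ) ⧸ N β)) := by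
  obtain ⟨⟨U, V, h1, h2⟩, -⟩ := h
  refine ⟨Submodule.Quotient.equiv _ _ U ?_⟩
  ext z
  rw [Submodule.mem_map]
  constructor
  · rintro ⟨_, ⟨y, hy, rfl⟩, rfl⟩
    exact ⟨V y, by rw [h2, hy], (h1 y).symm⟩
  · rintro ⟨y, hy, rfl⟩
    refine ⟨α * V.symm y, ⟨V.symm y, ?_, rfl⟩, ?_⟩
    · rw [← h2]; simpa using hy
    · simpa using h1 (V.symm y)

lemma chain_quot {m : ℕ} (γ : Fin (m + 1) → ℤ) (hγ : ∀ i j, i ≤ j → γ i ∣ γ j)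
    (I : Fin m → Ideal ℤ) (hI : ∀ i, I i = Ideal.span {γ i.castSucc}) :
    Nonempty (((Fin (m + 1) → ℤ) ⧸ N γ) ≃ₗ[ℤ] (((i : Fin m) → ℤ ⧸ I i) × ℤ)) := by
  have : ∀ i : Fin m, ∃ c, γ (Fin.last m) = γ i.castSucc * c := fun i =>
    hγ _ _ (Fin.le_last _)
  choose c hc using this
  let f : (Fin (m + 1) → ℤ) →ₗ[ℤ] (((i : Fin m) → ℤ ⧸ I i) × ℤ) :=
    LinearMap.prod (LinearMap.pi fun i => (I i).mkQ ∘ₗ LinearMap.proj i.castSucc)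
      (LinearMap.proj (Fin.last m) + ∑ i, c i • LinearMap.proj i.castSucc)
  have hf1 : ∀ x i, (f x).1 i = (I i).mkQ (x i.castSucc) := fun x i => rfl
  have hf2 : ∀ x, (f x).2 = x (Fin.last m) + ∑ i, c i * x i.castSucc := fun x => by
    simp [f]
  have hs : Function.Surjective f := by
    rintro ⟨p, t⟩
    choose q hq using fun i => (I i).mkQ_surjective (p i)
    refine ⟨Fin.snoc q (t - ∑ i, c i * q i), Prod.ext (funext fun i => ?_) ?_⟩
    · rw [hf1]; simpa using hq i
    · rw [hf2]; simp
  have hk : N γ = LinearMap.ker f := by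
    ext z
    rw [LinearMap.mem_ker, mem_N]
    constructor
    · rintro ⟨y, hy, rfl⟩
      refine Prod.ext (funext fun i => ?_) ?_
      · rw [hf1, Prod.fst_zero, Pi.zero_apply, Submodule.mkQ_apply, Submodule.Quotient.mk_eq_zero,
          hI, Ideal.mem_span_singleton]
        exact Dvd.intro _ rfl
      · rw [hf2]
        have : ∀ i : Fin m, c i * (γ * y) i.castSucc = γ (Fin.last m) * y i.castSucc := by
          intro i; rw [hc i]; simp; ring
        simp only [this]
        rw [← Finset.mul_sum, Pi.mul_apply, ← mul_add, add_comm, ← Fin.sum_univ_castSucc, hy]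
        simp
    · intro hz
      have h1 : ∀ i : Fin m, ∃ w, z i.castSucc = γ i.castSucc * w := by
        intro i
        have := hf1 z i
        rw [hz, Prod.fst_zero, Pi.zero_apply, eq_comm, Submodule.mkQ_apply,
          Submodule.Quotient.mk_eq_zero, hI, Ideal.mem_span_singleton] at this
        exact this
      choose w hw using h1
      have h2 := hf2 z
      rw [hz, Prod.snd_zero] at h2
      refine ⟨Fin.snoc w (-∑ i, w i), by simp [Fin.sum_univ_castSucc], funext fun i => ?_⟩
      refine Fin.lastCases ?_ (fun i => ?_) i
      · simp only [Pi.mul_apply, Fin.snoc_last]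
        have : ∀ i : Fin m, c i * z i.castSucc = γ (Fin.last m) * w i := by
          intro i; rw [hc i, hw i]; ring
        simp only [this] at h2
        rw [← Finset.mul_sum] at h2
        linear_combination h2
      · simp [hw]
  exact ⟨(Submodule.quotEquivOfEq _ _ hk).trans (f.quotKerEquivOfSurjective hs)⟩

lemma chain_gcd {n : ℕ} (γ : Fin n → ℤ) (hγ : ∀ i j, i ≤ j → γ i ∣ γ j) (k : ℕ) (hk : k ≤ n) :
    (Finset.powersetCard k (Finset.univ : Finset (Fin n))).gcd (fun s => ∏ i ∈ s, γ i)
      = ∏ i : Fin k, |γ (Fin.castLE hk i)| := by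
  rw [← Finset.abs_prod]
  apply dvd_antisymm_of_normalize_eq Finset.normalize_gcd
  · rw [Int.normalize_of_nonneg (abs_nonneg _)]
  · rw [dvd_abs]
    have := Finset.gcd_dvd (f := fun s => ∏ i ∈ s, γ i)
      (b := Finset.univ.map (Fin.castLEEmb hk))
      (s := Finset.powersetCard k (Finset.univ : Finset (Fin n)))
      (by simp [Finset.mem_powersetCard])
    simpa using this
  · rw [abs_dvd]
    apply Finset.dvd_gcd
    intro s hs
    have hs : s.card = k := (Finset.mem_powersetCard.1 hs).2
    conv_rhs => rw [← Finset.map_orderEmbOfFin_univ s hs]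
    rw [Finset.prod_map]
    apply Finset.prod_dvd_prod_of_dvd
    intro i _
    apply hγ
    have key : ∀ (j : ℕ) (hj : j < k), j ≤ (s.orderEmbOfFin hs ⟨j, hj⟩).1 := by
      intro j
      induction j with
      | zero => intro _; exact Nat.zero_le _
      | succ j ih =>
        intro hj
        have h1 := ih (by omega)
        have h2 : s.orderEmbOfFin hs ⟨j, by omega⟩ < s.orderEmbOfFin hs ⟨j+1, hj⟩ :=
          (s.orderEmbOfFin hs).strictMono (by simp)
        have := Fin.lt_def.1 h2
        omega
    exact Fin.le_def.2 (key i.1 i.2)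

lemma part3 (m : ℕ) (α : Fin (m + 1) → ℤ) :
    ∃ d : ℕ → ℤ,
      (∀ k : ℕ, 1 ≤ k → k ≤ m →
        ∏ j ∈ Finset.Icc 1 k, d j
          = Finset.gcd (Finset.powersetCard k (Finset.univ : Finset (Fin (m + 1))))
              (fun s => ∏ i ∈ s, α i)) ∧
      d (m + 1) = 0 ∧
      Nonempty
        (((Fin (m + 1) → ℤ) ⧸ N α) ≃ₗ[ℤ]
          (((i : Fin m) → ℤ ⧸ (Ideal.span {d (i.1 + 1)} : Ideal ℤ)) × ℤ)) := by
  obtain ⟨γ, hR, hγ⟩ := exists_chain _ α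
  let d : ℕ → ℤ := fun j => if h : j - 1 < m then |γ ⟨j - 1, by omega⟩| else 0
  have hd : ∀ (j : ℕ) (h : j < m), d (j + 1) = |γ ⟨j, by omega⟩| := by
    intro j h
    simp [d, h]
  refine ⟨d, ?_, by simp [d], ?_⟩
  · intro k hk1 hk
    have e : (Finset.powersetCard k (Finset.univ : Finset (Fin (m + 1)))).gcd
          (fun s => ∏ i ∈ s, α i)
        = (Finset.powersetCard k (Finset.univ : Finset (Fin (m + 1)))).gcd
          (fun s => ∏ i ∈ s, γ i) := by
      have h := P_coeff α k (by omega)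
      rw [hR.2, P_coeff γ k (by omega), Ideal.span_singleton_eq_span_singleton] at h
      exact dvd_antisymm_of_normalize_eq Finset.normalize_gcd Finset.normalize_gcd h.symm.dvd h.dvd
    rw [e, chain_gcd γ hγ k (by omega)]
    have : Finset.Icc 1 k = Finset.Ico 1 (k + 1) := by ext; simp only [Finset.mem_Icc, Finset.mem_Ico]; omega
    rw [this, Finset.prod_Ico_eq_prod_range, Nat.add_sub_cancel, Finset.prod_range]
    apply Finset.prod_congr rfl
    intro i _
    rw [add_comm, hd _ (by omega)]
    rfl
  · obtain ⟨e1⟩ := hR.quot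
    obtain ⟨e2⟩ := chain_quot γ hγ (fun i => Ideal.span {d (i.1 + 1)}) (by
      intro i
      rw [hd _ i.2, Ideal.span_singleton_eq_span_singleton]
      exact Int.associated_iff_natAbs.2 (Int.natAbs_abs _))
    exact ⟨e1.trans e2⟩

/-- incidence matrix of the cycle -/
def B (m : ℕ) : Matrix (Fin (m + 1)) (Fin (m + 1)) ℤ :=
  fun v e => if v = e then -1 else if v = e + 1 then 1 else 0

lemma B_mulVec (m : ℕ) (hm : 1 ≤ m) (x : Fin (m + 1) → ℤ) (v : Fin (m + 1)) :
    (B m *ᵥ x) v = x (v - 1) - x v := by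
  have h1 : (1 : Fin (m + 1)) ≠ 0 := by
    intro h
    have := congrArg Fin.val h
    simp [Fin.val_one'] at this
    omega
  have : ∀ e, B m v e * x e = (if e = v - 1 then x e else 0) - if e = v then x e else 0 := by
    intro e
    unfold B
    by_cases h : v = e
    · subst h
      have : v ≠ v - 1 := by
        intro h
        exact h1 (by simpa using h.symm)
      simp [this]
    · by_cases h' : v = e + 1
      · subst h'
        have : e ≠ e + 1 := fun h' => h h'.symm
        simp [h, this]
      · have : e ≠ v - 1 := by
          rintro rfl; simp at h'
        simp [h, Ne.symm h, h', this]
  rw [Matrix.mulVec, dotProduct]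
  simp [this, Finset.sum_sub_distrib]

lemma B_sum (m : ℕ) (hm : 1 ≤ m) (x : Fin (m + 1) → ℤ) :
    ∑ v, (B m *ᵥ x) v = 0 := by
  simp only [B_mulVec m hm, Finset.sum_sub_distrib]
  exact sub_eq_zero.2 ((Equiv.subRight (1 : Fin (m + 1))).sum_comp x)

lemma B_surj (m : ℕ) (hm : 1 ≤ m) (y : Fin (m + 1) → ℤ) (hy : ∑ i, y i = 0) :
    ∃ x, B m *ᵥ x = y := by
  refine ⟨fun v => -∑ w ∈ Finset.Iic v, y w, funext fun v => ?_⟩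
  rw [B_mulVec m hm]
  refine Fin.cases ?_ (fun i => ?_) v
  · have h1 : (0 : Fin (m + 1)) - 1 = Fin.last m := by
      rw [sub_eq_iff_eq_add]; simp
    have h2 : Finset.Iic (Fin.last m) = Finset.univ := by ext; simp [Fin.le_last]
    have h3 : Finset.Iic (0 : Fin (m + 1)) = {0} := by ext; simp
    rw [h1, h2, hy, h3]; simp
  · have h1 : i.succ - 1 = i.castSucc := by
      rw [sub_eq_iff_eq_add]; simp
    have h2 : Finset.Iic i.succ = insert i.succ (Finset.Iic i.castSucc) := by
      ext j; simp [Fin.le_def, Fin.ext_iff]; omega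
    rw [h1, h2, Finset.sum_insert (by simp [Fin.le_def])]
    ring

lemma B_det (m : ℕ) (hm : 1 ≤ m) : (B m).det = 0 := by
  rw [← Matrix.exists_vecMul_eq_zero_iff]
  refine ⟨1, one_ne_zero, funext fun e => ?_⟩
  have := B_sum m hm (Pi.single e 1)
  simpa [Matrix.vecMul, dotProduct] using this

lemma B_minor (m k : ℕ) (hm : 1 ≤ m) (hk : k ≤ m) (s : Finset (Fin (m + 1))) (hs : s.card = k) :
    ∃ p : Fin k ↪ Fin (m + 1), Finset.univ.map p = s ∧
      ((B m).submatrix p p).det = (-1) ^ k := by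
  obtain ⟨r, hr⟩ : ∃ r, r ∉ s := by
    by_contra! h
    have : s = Finset.univ := Finset.eq_univ_iff_forall.2 h
    rw [this] at hs
    simp at hs
    omega
  let s' := s.map (Equiv.subRight r).toEmbedding
  have hs' : s'.card = k := by simp [s', hs]
  have h0 : ∀ i, s'.orderEmbOfFin hs' i ≠ 0 := by
    intro i hi
    have := Finset.orderEmbOfFin_mem s' hs' i
    rw [hi] at this
    simp only [s', Finset.mem_map] at this
    obtain ⟨a, ha, h⟩ := this
    have : a = r := sub_eq_zero.1 h
    exact hr (this ▸ ha)
  let p : Fin k ↪ Fin (m + 1) :=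
    (s'.orderEmbOfFin hs').toEmbedding.trans (Equiv.addRight r).toEmbedding
  have hp : ∀ i, p i = s'.orderEmbOfFin hs' i + r := fun i => rfl
  refine ⟨p, ?_, ?_⟩
  · simp only [p]
    rw [← Finset.map_map, Finset.map_orderEmbOfFin_univ]
    simp only [s']
    rw [Finset.map_map]
    ext a; simp
  · rw [Matrix.det_of_isLowerTriangular]
    · simp [B]
    · intro i j hij
      have hij : i < j := hij
      have hlt := (s'.orderEmbOfFin hs').strictMono hij
      have hne : p i ≠ p j := fun h => hij.ne (p.injective h)
      have hne2 : p i ≠ p j + 1 := by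
        intro h
        rw [hp, hp, add_right_comm] at h
        have h := congrArg Fin.val (add_right_cancel h)
        rw [Fin.val_add_one] at h
        split_ifs at h
        · exact h0 i (Fin.ext h)
        · have := Fin.lt_def.1 hlt; omega
      simp [B, hne, hne2]

lemma fact (m : ℕ) (hm : 1 ≤ m) (α : Fin (m + 1) → ℤ) (M : Matrix (Fin (m + 1)) (Fin (m + 1)) ℤ)
    (hM : ∀ v e : Fin (m + 1), M v e =
      if v = e then -α e else if v.1 = (e.1 + 1) % (m + 1) then α v else 0) :
    M = Matrix.diagonal α * B m := by
  ext v e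
  rw [hM, Matrix.diagonal_mul, B]
  have : v = e + 1 ↔ v.1 = (e.1 + 1) % (m + 1) := by
    rw [Fin.ext_iff, Fin.val_add, Fin.val_one', Nat.add_mod_mod]
  by_cases h : v = e
  · simp [h]
  · simp [h, this]

end NGon

/-- for the `n`-gon with angle weights `α_0,...,α_{n-1} ∈ ℤ`, the matrix
`[∂_1]` of the φ-weighted boundary map (column `e` for edge `[v_e, v_{e+1}]`, indices
mod `n`, with entry `−α_e` in row `v_e` and `α_{e+1}` in row `v_{e+1}`) has
determinant `0`; for `1 ≤ k ≤ n−1` the gcd of the determinants of its `k×k` minors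
equals `gcd{α_{i_1}···α_{i_k} : i_1 < ⋯ < i_k}`; and consequently
`H_0(K,φ;ℤ) = ℤⁿ/im ∂_1 ≅ ℤ/d_1 ⊕ ⋯ ⊕ ℤ/d_{n-1} ⊕ ℤ` where
`d_1⋯d_k = gcd{α_{i_1}···α_{i_k}}` for `1 ≤ k ≤ n−1` and `d_n = 0`. -/
theorem stmt18 (n : ℕ) (hn : 3 ≤ n) (α : Fin n → ℤ)
    (M : Matrix (Fin n) (Fin n) ℤ)
    (hM : ∀ v e : Fin n, M v e = if v = e then -α e else if v.1 = (e.1 + 1) % n then α v else 0) :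
    M.det = 0 ∧
    (∀ k : ℕ, 1 ≤ k → k ≤ n - 1 →
      Finset.gcd Finset.univ
          (fun p : (Fin k ↪ Fin n) × (Fin k ↪ Fin n) => (M.submatrix p.1 p.2).det)
        = Finset.gcd (Finset.powersetCard k (Finset.univ : Finset (Fin n)))
            (fun s => ∏ i ∈ s, α i)) ∧
    ∃ d : ℕ → ℤ,
      (∀ k : ℕ, 1 ≤ k → k ≤ n - 1 →
        ∏ j ∈ Finset.Icc 1 k, d j
          = Finset.gcd (Finset.powersetCard k (Finset.univ : Finset (Fin n)))
              (fun s => ∏ i ∈ s, α i)) ∧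
      d n = 0 ∧
      Nonempty
        (((Fin n → ℤ) ⧸ LinearMap.range (Matrix.mulVecLin M)) ≃ₗ[ℤ]
          (((i : Fin (n - 1)) → ℤ ⧸ (Ideal.span {d (i.1 + 1)} : Ideal ℤ)) × ℤ)) := by
  obtain ⟨m, rfl⟩ : ∃ m, n = m + 1 := ⟨n - 1, by omega⟩
  have hm : 1 ≤ m := by omega
  have hF := NGon.fact m hm α M hM
  refine ⟨?_, ?_, ?_⟩
  · rw [hF, Matrix.det_mul, NGon.B_det m hm, mul_zero]
  · intro k hk1 hk
    have hdet : ∀ p q : Fin k ↪ Fin (m + 1), (M.submatrix p q).det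
        = (∏ i, α (p i)) * ((NGon.B m).submatrix p q).det := by
      intro p q
      rw [← Matrix.det_diagonal, ← Matrix.det_mul]
      congr 1
      ext i j
      rw [Matrix.submatrix_apply, hF, Matrix.diagonal_mul, Matrix.diagonal_mul]
      rfl
    apply dvd_antisymm_of_normalize_eq Finset.normalize_gcd Finset.normalize_gcd
    · apply Finset.dvd_gcd
      intro s hs
      obtain ⟨p, hp, hB⟩ := NGon.B_minor m k hm hk s (Finset.mem_powersetCard.1 hs).2
      have h := Finset.gcd_dvd
        (f := fun p : (Fin k ↪ Fin (m + 1)) × (Fin k ↪ Fin (m + 1)) => (M.submatrix p.1 p.2).det)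
        (Finset.mem_univ (p, p))
      simp only [hdet, hB] at h
      rw [← hp, Finset.prod_map]
      simp only [hdet]
      exact (IsUnit.dvd_mul_right ((isUnit_one.neg).pow k)).1 h
    · apply Finset.dvd_gcd
      rintro ⟨p, q⟩ -
      rw [hdet]
      apply Dvd.dvd.mul_right
      have h := Finset.gcd_dvd (f := fun s => ∏ i ∈ s, α i)
        (b := Finset.univ.map p)
        (s := Finset.powersetCard k (Finset.univ : Finset (Fin (m + 1))))
        (by simp [Finset.mem_powersetCard])
      simpa using h
  · have hr : LinearMap.range (Matrix.mulVecLin M) = NGon.N α := by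
      have hx : ∀ x, M *ᵥ x = α * (NGon.B m *ᵥ x) := by
        intro x
        rw [hF, ← Matrix.mulVec_mulVec]
        ext v
        rw [Matrix.mulVec_diagonal]
        rfl
      ext z
      rw [LinearMap.mem_range, NGon.mem_N]
      constructor
      · rintro ⟨x, rfl⟩
        exact ⟨_, NGon.B_sum m hm x, (hx x).symm⟩
      · rintro ⟨y, hy, rfl⟩
        obtain ⟨x, rfl⟩ := NGon.B_surj m hm y hy
        exact ⟨x, hx x⟩
    rw [hr]
    exact NGon.part3 m α
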